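/- Let k ≥ 3 be an integer and let G be a finite simple graph with circumference strictly less than k. Let P be a path of maximum length in G with vertices x_1, x_2, …, x_m in order. Then for every m' with 1 ≤ m' ≤ m, every path in G from x_1 to x_{m'} has length at most m' − 1 + 2(k − 2)². -/

import Mathlib

/-!
Let `b ≠ x₁` be a vertex of `P` and, among the vertices other than `b` that lie on every walk from
`x₁` to `b`, let `a` be the one nearest to `b`. A path `Q` from `x₁` to `b` passes through `a`. Its
part up to `a` is no longer than the corresponding part of `P`: replacing one by the other in `P`
gives a path again, because `a` separates `x₁` from the rest of `P`. No third vertex separates `a`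
from `b`, so, as in Whitney's theorem, `a` and `b` are joined by two internally disjoint paths. They
close up to a cycle, so one of them, `A`, has length at most `k - 2`. The part of `Q` from `a` to
`b` is cut by `A` into at most `k - 2` ears of `A`, and each ear has length at most `k - 2`, being
part of a cycle as well.
-/

open SimpleGraph Walk

section

variable {V : Type*} {G : SimpleGraph V} {u v w : V}

/-- The vertex `z` separates `a` from `b` in `G`, in the sense that every walk from `a` to `b`
meets `z`. The endpoints `a` and `b` themselves always separate. -/
def Separates (G : SimpleGraph V) (z a b : V) : Prop :=
  ∀ W : G.Walk a b, z ∈ W.support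

/-- Two walks with the same endpoints are internally disjoint if they share no further vertex.
A walk consisting of a single edge is internally disjoint from itself. -/
def InternallyDisjoint (p q : G.Walk u v) : Prop :=
  ∀ ⦃t⦄, t ∈ p.support → t ∈ q.support → t = u ∨ t = v

/-- The circumference of `G` is at most `n`, where acyclic graphs have circumference `0`. -/
def CircumferenceLE (G : SimpleGraph V) (n : ℕ) : Prop :=
  ∀ ⦃v : V⦄ (c : G.Walk v v), c.IsCycle → c.length ≤ n

theorem start_notMem_tail_support {p : G.Walk u v} (hp : p.IsPath) : u ∉ p.support.tail :=
  (List.nodup_cons.1 (p.cons_tail_support ▸ hp.support_nodup)).1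

theorem isPath_append_of_forall_mem_eq {p : G.Walk u v} {q : G.Walk v w} (hp : p.IsPath)
    (hq : q.IsPath) (h : ∀ t ∈ p.support, t ∈ q.support → t = v) : (p.append q).IsPath := by
  rw [isPath_def, support_append, List.nodup_append']
  refine ⟨hp.support_nodup, hq.support_nodup.tail, fun t htp htq => start_notMem_tail_support hq ?_⟩
  exact h t htp (List.mem_of_mem_tail htq) ▸ htq

theorem exists_isPath_forall_mem_of_preconnected_induce {S : Set V}
    (hS : (G.induce S).Preconnected) (hu : u ∈ S) (hv : v ∈ S) :
    ∃ p : G.Walk u v, p.IsPath ∧ ∀ t ∈ p.support, t ∈ S := by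
  obtain ⟨p, hp⟩ := (hS ⟨u, hu⟩ ⟨v, hv⟩).exists_isPath
  refine ⟨p.map (Embedding.induce S).toHom, hp.map Subtype.val_injective, fun t ht => ?_⟩
  obtain ⟨s, -, rfl⟩ := List.mem_map.1 (support_map _ p ▸ ht)
  exact s.2

theorem exists_walk_start_notMem_support {p : G.Walk u v} (hp : p.IsPath) {s t : V}
    (hs : s ∈ p.support) (ht : t ∈ p.support) (hsu : s ≠ u) (htu : t ≠ u) :
    ∃ W : G.Walk s t, u ∉ W.support := by
  cases p with
  | nil => exact absurd (mem_support_nil_iff.1 hs) hsu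
  | cons h p =>
    have hu := ((cons_isPath_iff h p).1 hp).2
    rw [support_cons, List.mem_cons] at hs ht
    obtain ⟨W, -, hW⟩ := exists_isPath_forall_mem_of_preconnected_induce
      p.connected_induce_support.preconnected (hs.resolve_left hsu) (ht.resolve_left htu)
    exact ⟨W, fun huW => hu (hW u huW)⟩

namespace InternallyDisjoint

variable {p q : G.Walk u v}

theorem symm (h : InternallyDisjoint p q) : InternallyDisjoint q p :=
  fun _ hq hp => h hp hq

theorem bypass [DecidableEq V] (h : InternallyDisjoint p q) :
    InternallyDisjoint p.bypass q.bypass :=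
  fun _ hp hq => h (p.support_bypass_subset_support hp) (q.support_bypass_subset_support hq)

theorem isCycle_append_reverse (h : InternallyDisjoint p q) (hp : p.IsPath) (hq : q.IsPath)
    (hlen : 1 < p.length) : (p.append q.reverse).IsCycle := by
  refine hp.isCycle_append hq.reverse (fun t htp htq => ?_) (Or.inl hlen)
  have htq' : t ∈ q.support := by simpa using List.mem_of_mem_tail htq
  rcases h (List.mem_of_mem_tail htp) htq' with rfl | rfl
  · exact start_notMem_tail_support hp htp
  · exact start_notMem_tail_support hq.reverse htq

/-- The inductive step of Whitney's theorem: `r` leads from the end `b` of an edge `wb` back to the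
first of two internally disjoint walks ending in `w`, which is rerouted along `r`, while the second
one is extended by `wb`. -/
theorem exists_reroute {a b y : V} {A B : G.Walk a w} (hAB : InternallyDisjoint A B)
    (hA : A.IsPath) (hwb : G.Adj w b) (hyA : y ∈ A.support) (hyw : y ≠ w) {r : G.Walk b y}
    (hr : ∀ t ∈ r.support, t ∈ A.support ∨ t ∈ B.support → t = y) :
    ∃ A' B' : G.Walk a b, InternallyDisjoint A' B' := by
  classical
  have hw : w ∉ (A.takeUntil y hyA).support :=
    endpoint_notMem_support_takeUntil hA hyA hyw.symm
  have hstart : ∀ t ∈ (A.takeUntil y hyA).support, t ∈ B.support → t = a := fun t ht htB =>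
    (hAB (A.support_takeUntil_subset_support hyA ht) htB).resolve_right fun htw => hw (htw ▸ ht)
  refine ⟨(A.takeUntil y hyA).append r.reverse, B.concat hwb, fun t htA htB => ?_⟩
  rw [mem_support_append_iff, support_reverse, List.mem_reverse] at htA
  rw [support_concat, List.mem_append, List.mem_singleton] at htB
  refine htB.imp (fun htB => ?_) id
  rcases htA with htA | htr
  · exact hstart t htA htB
  · obtain rfl := hr t htr (Or.inr htB)
    exact hstart t (end_mem_support _) htB

end InternallyDisjoint

namespace Separates

variable {a b x y z : V}

theorem trans (hz : Separates G z a b) (ha : Separates G a x b) : Separates G z x b := by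
  classical
  exact fun W => W.support_dropUntil_subset_support (ha W) (hz _)

theorem of_walk (h : Separates G a x b) (p : G.Walk x y) (hp : a ∉ p.support) :
    Separates G a y b :=
  fun W => ((mem_support_append_iff p W).1 (h (p.append W))).resolve_left hp

theorem isPath_append (h : Separates G a x b) (hab : a ≠ b) {p : G.Walk x a} (hp : p.IsPath)
    {q : G.Walk a y} (hq : q.IsPath) (hb : b ∈ q.support) : (p.append q).IsPath := by
  classical
  refine isPath_append_of_forall_mem_eq hp hq fun t htp htq => ?_
  by_contra hta
  have hat : Separates G a t b :=
    h.of_walk (p.takeUntil t htp) (endpoint_notMem_support_takeUntil hp htp (Ne.symm hta))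
  obtain ⟨W, hW⟩ := exists_walk_start_notMem_support hq htq hb hta hab.symm
  exact hW (hat W)

theorem exists_last (hxb : x ≠ b) (hr : G.Reachable x b) :
    ∃ a, a ≠ b ∧ Separates G a x b ∧ ∀ z, Separates G z a b → z = a ∨ z = b := by
  classical
  obtain ⟨a, ⟨hab, ha⟩, hmin⟩ := exists_minimalFor_of_wellFoundedLT
    (fun z => z ≠ b ∧ Separates G z x b) (fun z => G.dist z b)
    ⟨x, hxb, fun W => W.start_mem_support⟩
  refine ⟨a, hab, ha, fun z hz => ?_⟩
  by_contra! hzab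
  obtain ⟨R⟩ := hr
  obtain ⟨D, hD⟩ := (R.dropUntil a (ha R)).reachable.exists_walk_length_eq_dist
  have hlt : G.dist z b < G.dist a b := calc
    G.dist z b ≤ (D.dropUntil z (hz D)).length := dist_le _
    _ < D.length := length_dropUntil_lt_length (hz D) hzab.1
    _ = G.dist a b := hD
  exact hlt.not_ge (hmin ⟨hzab.2, hz.trans ha⟩ hlt.le)

end Separates

theorem exists_internallyDisjoint_of_forall_separates {a b : V} (hab : a ≠ b)
    (hr : G.Reachable a b) (hsep : ∀ z, Separates G z a b → z = a ∨ z = b) :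
    ∃ A B : G.Walk a b, A.IsPath ∧ B.IsPath ∧ InternallyDisjoint A B := by
  classical
  suffices ∃ A B : G.Walk a b, InternallyDisjoint A B by
    obtain ⟨A, B, hAB⟩ := this
    exact ⟨A.bypass, B.bypass, A.bypass_isPath, B.bypass_isPath, hAB.bypass⟩
  obtain ⟨R, hR⟩ := hr.symm.exists_isPath
  induction R with
  | nil => exact absurd rfl hab
  | @cons b w a hbw R ih =>
    obtain ⟨hR, hbR⟩ := (cons_isPath_iff hbw R).1 hR
    by_cases haw : a = w
    · subst haw
      exact ⟨hbw.symm.toWalk, hbw.symm.toWalk, fun t ht _ => by simpa using ht⟩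
    have hsep' : ∀ z, Separates G z a w → z = a ∨ z = w := by
      intro z hz
      by_contra! hzaw
      have hzb : z ≠ b := by
        rintro rfl
        exact hbR (by simpa using hz R.reverse)
      have hzab : Separates G z a b := fun W => by
        simpa [support_concat, hzaw.2] using hz (W.concat hbw)
      exact (hsep z hzab).elim hzaw.1 hzb
    obtain ⟨A, B, hAB⟩ := ih haw R.reverse.reachable hsep' hR
    obtain ⟨D, hD⟩ : ∃ D : G.Walk a b, w ∉ D.support := by
      by_contra! hw
      exact (hsep w hw).elim (Ne.symm haw) hbw.ne'
    obtain ⟨y, hyAB, hyD, hfirst⟩ := D.reverse.exists_mem_support_forall_mem_support_imp_eq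
      (A.bypass.support ++ B.bypass.support).toFinset ⟨a, by simp⟩
    simp only [List.mem_toFinset, List.mem_append] at hyAB hfirst
    have hyw : y ≠ w := by
      rintro rfl
      exact hD (by simpa using hyD)
    rcases hyAB with hyA | hyB
    · exact hAB.bypass.exists_reroute A.bypass_isPath hbw.symm hyA hyw
        fun t ht htAB => hfirst t htAB ht
    · exact hAB.bypass.symm.exists_reroute B.bypass_isPath hbw.symm hyB hyw
        fun t ht htBA => hfirst t htBA.symm ht

namespace CircumferenceLE

variable {ℓ : ℕ}

theorem length_le_of_internallyDisjoint (hG : CircumferenceLE G (ℓ + 1)) (hℓ : 1 ≤ ℓ)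
    (huv : u ≠ v) {p q : G.Walk u v} (hp : p.IsPath) (hq : q.IsPath)
    (h : InternallyDisjoint p q) : p.length ≤ ℓ := by
  by_contra! hlt
  have hcycle := hG _ (h.isCycle_append_reverse hp hq (by omega))
  have hq0 : q.length ≠ 0 := fun h0 => huv (eq_of_length_eq_zero h0)
  rw [length_append, length_reverse] at hcycle
  omega

theorem length_le_of_ear (hG : CircumferenceLE G (ℓ + 1)) (hℓ : 1 ≤ ℓ) {S : Set V}
    (hS : (G.induce S).Preconnected) (hu : u ∈ S) (hv : v ∈ S) (huv : u ≠ v) {p : G.Walk u v}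
    (hp : p.IsPath) (hpS : ∀ t ∈ p.support, t ∈ S → t = u ∨ t = v) : p.length ≤ ℓ := by
  obtain ⟨q, hq, hqS⟩ := exists_isPath_forall_mem_of_preconnected_induce hS hu hv
  exact hG.length_le_of_internallyDisjoint hℓ huv hp hq fun t htp htq => hpS t htp (hqS t htq)

theorem length_add_le_mul_countP [DecidableEq V] (hG : CircumferenceLE G (ℓ + 1)) (hℓ : 1 ≤ ℓ)
    {S : Finset V} (hS : (G.induce (S : Set V)).Preconnected) (hu : u ∈ S) (hv : v ∈ S)
    {Q : G.Walk u v} (hQ : Q.IsPath) : Q.length + ℓ ≤ ℓ * Q.support.countP (· ∈ S) := by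
  induction hn : Q.length using Nat.strong_induction_on generalizing u with | _ n ih
  subst hn
  cases Q with
  | nil => simp [hu]
  | @cons _ w _ h Q =>
    obtain ⟨hQ, huQ⟩ := (cons_isPath_iff h Q).1 hQ
    obtain ⟨y, hyS, hyQ, hfirst⟩ :=
      Q.exists_mem_support_forall_mem_support_imp_eq S ⟨v, by simp [hv]⟩
    have hsplit : (Q.takeUntil y hyQ).length + (Q.dropUntil y hyQ).length = Q.length := by
      rw [← length_append, take_spec]
    have hear : (cons h (Q.takeUntil y hyQ)).length ≤ ℓ := by
      have huy : u ≠ y := fun huy => huQ (huy ▸ hyQ)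
      have hpath : (cons h (Q.takeUntil y hyQ)).IsPath := (hQ.takeUntil hyQ).cons
        fun hu => huQ (Q.support_takeUntil_subset_support hyQ hu)
      refine hG.length_le_of_ear hℓ hS hu hyS huy hpath fun t ht htS => ?_
      exact (List.mem_cons.1 ht).imp_right (hfirst t htS)
    have hrest := ih _ (by rw [length_cons]; omega) hyS (hQ.dropUntil hyQ) rfl
    have hcount : (Q.dropUntil y hyQ).support.countP (· ∈ S) + 1 ≤
        (cons h Q).support.countP (· ∈ S) := by
      rw [support_cons, List.countP_cons_of_pos (by simpa using hu)]
      exact Nat.succ_le_succ (Q.support_dropUntil_suffix_support hyQ).sublist.countP_le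
    rw [length_cons] at hear ⊢
    calc Q.length + 1 + ℓ
        ≤ ((Q.dropUntil y hyQ).length + ℓ) + ℓ := by omega
      _ ≤ ℓ * ((Q.dropUntil y hyQ).support.countP (· ∈ S) + 1) := by rw [mul_add_one]; omega
      _ ≤ ℓ * (cons h Q).support.countP (· ∈ S) := Nat.mul_le_mul_left ℓ hcount

theorem length_le_mul_length (hG : CircumferenceLE G (ℓ + 1)) (hℓ : 1 ≤ ℓ) (A : G.Walk u v)
    {Q : G.Walk u v} (hQ : Q.IsPath) : Q.length ≤ ℓ * A.length := by
  classical
  have hA : (G.induce (A.support.toFinset : Set V)).Preconnected := by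
    rw [List.coe_toFinset]
    exact A.connected_induce_support.preconnected
  have hQA := hG.length_add_le_mul_countP hℓ hA (by simp) (by simp) hQ
  have hcount : Q.support.countP (· ∈ A.support.toFinset) ≤ A.length + 1 := by
    rw [List.countP_eq_length_filter, ← length_support]
    exact ((hQ.support_nodup.filter _).subperm fun t ht => by simpa using
      (List.mem_filter.1 ht).2).length_le
  have := Nat.mul_le_mul_left ℓ hcount
  rw [mul_add_one] at this
  omega

theorem length_le_sq_of_forall_separates (hG : CircumferenceLE G (ℓ + 1)) (hℓ : 1 ≤ ℓ)
    {a b : V} (hab : a ≠ b) (hsep : ∀ z, Separates G z a b → z = a ∨ z = b)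
    {Q : G.Walk a b} (hQ : Q.IsPath) : Q.length ≤ ℓ ^ 2 := by
  obtain ⟨A, B, hA, hB, hAB⟩ := exists_internallyDisjoint_of_forall_separates hab Q.reachable hsep
  calc Q.length
      ≤ ℓ * A.length := hG.length_le_mul_length hℓ A hQ
    _ ≤ ℓ * ℓ := Nat.mul_le_mul_left ℓ (hG.length_le_of_internallyDisjoint hℓ hab hA hB hAB)
    _ = ℓ ^ 2 := (sq ℓ).symm

theorem length_le_length_add_sq (hG : CircumferenceLE G (ℓ + 1)) (hℓ : 1 ≤ ℓ) {x y b : V}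
    {P₁ : G.Walk x b} {P₂ : G.Walk b y} (hP : (P₁.append P₂).IsPath)
    (hmax : ∀ R : G.Walk x y, R.IsPath → R.length ≤ (P₁.append P₂).length)
    {Q : G.Walk x b} (hQ : Q.IsPath) : Q.length ≤ P₁.length + ℓ ^ 2 := by
  rcases eq_or_ne x b with rfl | hxb
  · simp [length_eq_zero_iff.2 (isPath_iff_nil.1 hQ)]
  obtain ⟨a, hab, ha, hsep⟩ := Separates.exists_last hxb Q.reachable
  obtain ⟨S₁, S₂, rfl⟩ := mem_support_iff_exists_append.1 (ha P₁)
  obtain ⟨Q₁, Q₂, rfl⟩ := mem_support_iff_exists_append.1 (ha Q)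
  rw [← append_assoc] at hP hmax
  have hexchange : (Q₁.append (S₂.append P₂)).IsPath :=
    ha.isPath_append hab hQ.of_append_left hP.of_append_right (by simp)
  have hQ₁ : Q₁.length ≤ S₁.length := by simpa [length_append] using hmax _ hexchange
  have hQ₂ : Q₂.length ≤ ℓ ^ 2 :=
    hG.length_le_sq_of_forall_separates hℓ hab hsep hQ.of_append_right
  rw [length_append, length_append]
  omega

end CircumferenceLE

end

theorem stmt_10_general {V : Type*} (G : SimpleGraph V)
    {k : ℕ} (hk : 3 ≤ k)
    (hcirc : ∀ (v : V) (c : G.Walk v v), c.IsCycle → c.length < k)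
    {x₁ xₘ : V} (P : G.Walk x₁ xₘ) (hP : P.IsPath)
    (hmax : ∀ R : G.Walk x₁ xₘ, R.IsPath → R.length ≤ P.length)
    (i : Fin P.support.length) :
    ∀ Q : G.Walk x₁ (P.support.get i), Q.IsPath → Q.length ≤ i + (k - 2) ^ 2 := by
  have hG : CircumferenceLE G (k - 2 + 1) := fun v c hc => by have := hcirc v c hc; omega
  rw [← P.append_take_drop_eq i] at hP hmax
  rw [List.get_eq_getElem, support_getElem_eq_getVert]
  intro Q hQ
  have hlen : (P.take i).length ≤ i := by rw [take_length]; exact min_le_left _ _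
  exact (hG.length_le_length_add_sq (by omega) hP hmax hQ).trans (Nat.add_le_add_right hlen _)

theorem stmt_10 {V : Type*} [Fintype V] (G : SimpleGraph V)
    {k : ℕ} (hk : 3 ≤ k)
    (hcirc : ∀ (v : V) (c : G.Walk v v), c.IsCycle → c.length < k)
    {x₁ xₘ : V} (P : G.Walk x₁ xₘ) (hP : P.IsPath)
    (hmax : ∀ (a b : V) (R : G.Walk a b), R.IsPath → R.length ≤ P.length) :
    ∀ (m' : ℕ) (h1 : 1 ≤ m') (h2 : m' ≤ P.support.length)
      (Q : G.Walk x₁ (P.support.get ⟨m' - 1, by omega⟩)), Q.IsPath →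
      Q.length ≤ m' - 1 + 2 * (k - 2) ^ 2 := by
  intro m' h1 h2 Q hQ
  exact (stmt_10_general G hk hcirc P hP (hmax x₁ xₘ) _ Q hQ).trans
    (Nat.add_le_add_left (Nat.le_mul_of_pos_left _ two_pos) _)
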